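/- arXiv:1606.02206 — 4 statements merged into one kernel-verified Lean document; each statement's English description precedes it below -/
import Mathlib

section
/- (Weak version of the minimax theorem for robust Bayes rules.) Suppose 𝒳 and 𝒴 are finite sets, Γ is a convex and closed set of joint probability distributions on 𝒳 × 𝒴, the loss function L : 𝒴 × 𝒜 → [0,∞) is bounded by a constant C, and the risk set S = { (L(y,a))_{y∈𝒴} : a ∈ 𝒜 } is a closed subset of ℝ^{|𝒴|}. Then there exists a randomized decision rule ψ* that is a robust Bayes decision rule against Γ, and ψ* is a Bayes decision rule for some distribution P* ∈ Γ that maximizes the conditional entropy H(Y|X) over Γ. -/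
open MeasureTheory

/-- The loss `L(y,ζ)` of a randomized act `ζ` (a probability measure on actions):
`L(y,ζ) = E_{A∼ζ}[L(y,A)]`. -/
noncomputable def actLoss {Y A : Type*} [MeasurableSpace A]
    (L : Y → A → ℝ) (y : Y) (ζ : Measure A) : ℝ :=
  ∫ a, L y a ∂ζ

/-- A randomized decision rule assigns a probability measure on actions to each `x`. -/
def IsRandRule {X A : Type*} [MeasurableSpace A] (ψ : X → Measure A) : Prop :=
  ∀ x, IsProbabilityMeasure (ψ x)

/-- Expected loss `E_P[L(Y, ψ(X))]` of a randomized decision rule `ψ` under the joint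
distribution `P` on finite `𝒳 × 𝒴`. -/
noncomputable def expLoss {X Y A : Type*} [Fintype X] [Fintype Y] [MeasurableSpace A]
    (L : Y → A → ℝ) (P : X → Y → ℝ) (ψ : X → Measure A) : ℝ :=
  ∑ x, ∑ y, P x y * actLoss L y (ψ x)

/-- The generalized conditional entropy
`H(Y|X) = ∑_x P_X(x) · inf_ζ E[L(Y,ζ)|X=x]`, written in the equivalent unnormalized form
`∑_x inf_ζ ∑_y P(x,y) L(y,ζ)`, the infimum running over randomized acts. -/
noncomputable def condEnt {X Y A : Type*} [Fintype X] [Fintype Y] [MeasurableSpace A]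
    (L : Y → A → ℝ) (P : X → Y → ℝ) : ℝ :=
  ∑ x, ⨅ ζ : {m : Measure A // IsProbabilityMeasure m}, ∑ y, P x y * actLoss L y ζ.1

/-!
When the risk set is compact, so is its convex hull `K`, by Carathéodory's theorem, and the loss
vectors `(L(y,ζ))_y` of randomized acts `ζ` are exactly the points of `K`. A decision rule thus
amounts to a point `r` of the compact convex set `K^𝒳`, and its expected loss `∑ P(x,y) r(x,y)` is
bilinear in `(r, P)`, so Sion's minimax theorem on `K^𝒳 × Γ` yields a saddle point `(ψ*, P*)`. The
rule `ψ*` is then robust Bayes, and letting it deviate at a single `x` shows that it is Bayes for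
`P*`. Finally, `H(Y|X)` under any `P ∈ Γ` is at most the loss of `ψ*` under `P`, hence at most the
loss of `ψ*` under `P*`, which is `H(Y|X)` under `P*`.
-/

theorem convexHull_eq_iUnion_image_stdSimplex {𝕜 E : Type*} [Field 𝕜] [LinearOrder 𝕜]
    [IsStrictOrderedRing 𝕜] [AddCommGroup E] [Module 𝕜 E] [FiniteDimensional 𝕜 E] (s : Set E) :
    convexHull 𝕜 s = ⋃ k ∈ Set.Iic (Module.finrank 𝕜 E + 1),
      (fun p : (Fin k → 𝕜) × (Fin k → E) => ∑ i, p.1 i • p.2 i) ''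
        (stdSimplex 𝕜 (Fin k) ×ˢ Set.univ.pi fun _ => s) := by
  apply Set.Subset.antisymm
  · intro v hv
    obtain ⟨ι, _, z, w, hz, hindep, hw_pos, hw_sum, rfl⟩ := eq_pos_convex_span_of_mem_convexHull hv
    have hcard : Fintype.card ι ≤ Module.finrank 𝕜 E + 1 :=
      hindep.card_le_finrank_succ.trans (Nat.add_le_add_right (Submodule.finrank_le _) 1)
    let e := (Fintype.equivFin ι).symm
    exact Set.mem_biUnion hcard
      ⟨(w ∘ e, z ∘ e),
        ⟨⟨fun i => (hw_pos (e i)).le, (Equiv.sum_comp e w).trans hw_sum⟩,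
          fun i _ => hz (Set.mem_range_self (e i))⟩,
        Equiv.sum_comp e fun i => w i • z i⟩
  · refine Set.iUnion₂_subset fun k _ => ?_
    rintro _ ⟨⟨w, z⟩, ⟨⟨hw_nonneg, hw_sum⟩, hz⟩, rfl⟩
    exact (convex_convexHull 𝕜 s).sum_mem (fun i _ => hw_nonneg i) hw_sum
      fun i _ => subset_convexHull 𝕜 s (hz i trivial)

theorem isCompact_convexHull_of_finiteDimensional {E : Type*} [AddCommGroup E] [Module ℝ E]
    [FiniteDimensional ℝ E] [TopologicalSpace E] [ContinuousAdd E] [ContinuousSMul ℝ E]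
    {s : Set E} (hs : IsCompact s) : IsCompact (convexHull ℝ s) := by
  rw [convexHull_eq_iUnion_image_stdSimplex]
  refine (Set.finite_Iic _).isCompact_biUnion fun k _ => ?_
  exact ((isCompact_stdSimplex ℝ (Fin k)).prod (isCompact_univ_pi fun _ => hs)).image (by fun_prop)

section Barycenter

variable {A E : Type*} [MeasurableSpace A] [NormedAddCommGroup E] {f : A → E}

theorem integrable_of_isBounded_range {μ : Measure A} [IsFiniteMeasure μ]
    (hf : AEStronglyMeasurable f μ) (hbdd : Bornology.IsBounded (Set.range f)) :
    Integrable f μ := by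
  obtain ⟨C, hC⟩ := hbdd.exists_norm_le
  exact Integrable.of_bound hf C (.of_forall fun a => hC _ (Set.mem_range_self a))

variable [NormedSpace ℝ E]

theorem convex_setOf_integral_isProbabilityMeasure (f : A → E) :
    Convex ℝ {v | ∃ μ : Measure A, IsProbabilityMeasure μ ∧ Integrable f μ ∧ ∫ a, f a ∂μ = v} := by
  rintro _ ⟨μ, hμ, hfμ, rfl⟩ _ ⟨ν, hν, hfν, rfl⟩ s t hs ht hst
  have hfsμ := hfμ.smul_measure (ENNReal.ofReal_ne_top (r := s))
  have hftν := hfν.smul_measure (ENNReal.ofReal_ne_top (r := t))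
  refine ⟨ENNReal.ofReal s • μ + ENNReal.ofReal t • ν, ⟨?_⟩, hfsμ.add_measure hftν, ?_⟩
  · simp [← ENNReal.ofReal_add hs ht, hst]
  · rw [integral_add_measure hfsμ hftν, integral_smul_measure, integral_smul_measure,
      ENNReal.toReal_ofReal hs, ENNReal.toReal_ofReal ht]

theorem exists_integral_eq_of_mem_convexHull_range [CompleteSpace E] (hf : StronglyMeasurable f)
    {v : E} (hv : v ∈ convexHull ℝ (Set.range f)) :
    ∃ μ : Measure A, IsProbabilityMeasure μ ∧ Integrable f μ ∧ ∫ a, f a ∂μ = v := by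
  refine convexHull_min ?_ (convex_setOf_integral_isProbabilityMeasure f) hv
  rintro _ ⟨a, rfl⟩
  exact ⟨Measure.dirac a, inferInstance, integrable_dirac' hf enorm_lt_top, integral_dirac' f a hf⟩

theorem integral_mem_convexHull_range [FiniteDimensional ℝ E] {μ : Measure A}
    [IsProbabilityMeasure μ] (hf : Integrable f μ) (hcompact : IsCompact (Set.range f)) :
    ∫ a, f a ∂μ ∈ convexHull ℝ (Set.range f) :=
  have := FiniteDimensional.complete ℝ E
  (convex_convexHull ℝ _).integral_mem
    (isCompact_convexHull_of_finiteDimensional hcompact).isClosed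
    (.of_forall fun a => subset_convexHull ℝ _ (Set.mem_range_self a)) hf

end Barycenter

theorem exists_isSaddlePointOn_bilinear {E F : Type*}
    [TopologicalSpace E] [AddCommGroup E] [Module ℝ E] [IsTopologicalAddGroup E]
    [ContinuousSMul ℝ E] [TopologicalSpace F] [AddCommGroup F] [Module ℝ F]
    [IsTopologicalAddGroup F] [ContinuousSMul ℝ F] (B : E →ₗ[ℝ] F →ₗ[ℝ] ℝ)
    (hB_left : ∀ y, Continuous fun x => B x y) (hB_right : ∀ x, Continuous (B x))
    {S : Set E} (hS_ne : S.Nonempty) (hS_convex : Convex ℝ S) (hS_compact : IsCompact S)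
    {T : Set F} (hT_ne : T.Nonempty) (hT_convex : Convex ℝ T) (hT_compact : IsCompact T) :
    ∃ a ∈ S, ∃ b ∈ T, IsSaddlePointOn S T (fun x y => B x y) a b :=
  Sion.exists_isSaddlePointOn hS_ne hS_convex hS_compact
    (fun y _ => (hB_left y).lowerSemicontinuous.lowerSemicontinuousOn S)
    (fun y _ => ((B.flip y).convexOn hS_convex).quasiconvexOn)
    hT_convex hT_ne hT_compact
    (fun x _ => (hB_right x).upperSemicontinuous.upperSemicontinuousOn T)
    (fun x _ => ((B x).concaveOn hT_convex).quasiconcaveOn)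

theorem le_of_sum_le_sum_update {ι β M : Type*} [Fintype ι] [DecidableEq ι] [AddCommMonoid M]
    [LinearOrder M] [IsOrderedCancelAddMonoid M] {f : ι → β → M} {a : ι → β} {i : ι} {b : β}
    (h : ∑ j, f j (a j) ≤ ∑ j, f j (Function.update a i b j)) : f i (a i) ≤ f i b := by
  by_contra! hlt
  refine h.not_gt (Finset.sum_lt_sum (fun j _ => ?_) ⟨i, Finset.mem_univ i, by simpa using hlt⟩)
  rcases eq_or_ne j i with rfl | hj
  · simpa using hlt.le
  · simp [hj]

-- In `ℝ` the inner supremum on the left is the junk value `0` whenever `i ∉ s`.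
theorem biSup_eq_iSup_subtype_of_nonneg {ι : Type*} {s : Set ι} {f : ι → ℝ}
    (hf : ∀ i ∈ s, 0 ≤ f i) : ⨆ i ∈ s, f i = ⨆ i : s, f i := by
  by_cases hs : ∀ i, i ∈ s
  · exact cbiSup_eq_of_forall (f := fun i : s => f i) hs
  · rw [cbiSup_eq_of_not_forall (f := fun i : s => f i) hs, Real.sSup_empty]
    exact max_eq_left (Real.iSup_nonneg fun i => hf i i.2)

theorem isCompact_of_isClosed_of_nonneg_of_sum_eq_one {X Y : Type*} [Fintype X] [Fintype Y]
    {Γ : Set (X → Y → ℝ)} (hΓ : ∀ P ∈ Γ, (∀ x y, 0 ≤ P x y) ∧ ∑ x, ∑ y, P x y = 1)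
    (hclosed : IsClosed Γ) : IsCompact Γ := by
  refine (isCompact_Icc (a := 0) (b := 1)).of_isClosed_subset hclosed
    fun P hP => ⟨(hΓ P hP).1, fun x y => ?_⟩
  obtain ⟨h_nonneg, h_sum⟩ := hΓ P hP
  calc P x y ≤ ∑ y, P x y :=
        Finset.single_le_sum (fun y _ => h_nonneg x y) (Finset.mem_univ y)
    _ ≤ ∑ x, ∑ y, P x y :=
        Finset.single_le_sum (f := fun x => ∑ y, P x y)
          (fun x _ => Finset.sum_nonneg fun y _ => h_nonneg x y) (Finset.mem_univ x)
    _ = 1 := h_sum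

/-- The risk set `S = {(L(y,a))_y : a ∈ 𝒜}` of the pure actions. -/
def riskSet {Y A : Type*} (L : Y → A → ℝ) : Set (Y → ℝ) :=
  Set.range fun a y => L y a

theorem isCompact_riskSet {Y A : Type*} {L : Y → A → ℝ} {c C : ℝ}
    (hL : ∀ y a, L y a ∈ Set.Icc c C) (hclosed : IsClosed (riskSet L)) :
    IsCompact (riskSet L) := by
  refine (isCompact_Icc (a := fun _ => c) (b := fun _ => C)).of_isClosed_subset hclosed ?_
  rintro _ ⟨a, rfl⟩
  exact ⟨fun y => (hL y a).1, fun y => (hL y a).2⟩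

section RandomizedActs

variable {Y A : Type*} [MeasurableSpace A] {L : Y → A → ℝ}

theorem integral_eq_actLoss [Fintype Y] {ζ : Measure A} (hL : Integrable (fun a y => L y a) ζ) :
    ∫ a, (fun y => L y a) ∂ζ = fun y => actLoss L y ζ :=
  funext (eval_integral hL.eval)

theorem exists_actLoss_eq_of_mem_convexHull_riskSet [Finite Y] (hLm : ∀ y, Measurable (L y))
    {v : Y → ℝ} (hv : v ∈ convexHull ℝ (riskSet L)) :
    ∃ ζ : Measure A, IsProbabilityMeasure ζ ∧ (fun y => actLoss L y ζ) = v := by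
  have := Fintype.ofFinite Y
  obtain ⟨ζ, hζ, hint, rfl⟩ :=
    exists_integral_eq_of_mem_convexHull_range (measurable_pi_lambda _ hLm).stronglyMeasurable hv
  exact ⟨ζ, hζ, (integral_eq_actLoss hint).symm⟩

theorem actLoss_mem_convexHull_riskSet [Finite Y] (hLm : ∀ y, Measurable (L y))
    (hrisk : IsCompact (riskSet L)) (ζ : Measure A) [IsProbabilityMeasure ζ] :
    (fun y => actLoss L y ζ) ∈ convexHull ℝ (riskSet L) := by
  have := Fintype.ofFinite Y
  have hint : Integrable (fun a y => L y a) ζ :=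
    integrable_of_isBounded_range (measurable_pi_lambda _ hLm).aestronglyMeasurable hrisk.isBounded
  rw [← integral_eq_actLoss hint]
  exact integral_mem_convexHull_range hint hrisk

theorem bddBelow_range_sum_mul_actLoss [Fintype Y] (hLm : ∀ y, Measurable (L y))
    (hrisk : IsCompact (riskSet L)) (p : Y → ℝ) :
    BddBelow (Set.range fun ζ : {m : Measure A // IsProbabilityMeasure m} =>
      ∑ y, p y * actLoss L y ζ.1) := by
  have hcont : Continuous fun v : Y → ℝ => ∑ y, p y * v y := by fun_prop
  refine ((isCompact_convexHull_of_finiteDimensional hrisk).bddBelow_image hcont.continuousOn).mono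
    (Set.range_subset_iff.2 fun ⟨ζ, _⟩ => ?_)
  exact ⟨_, actLoss_mem_convexHull_riskSet hLm hrisk ζ, rfl⟩

end RandomizedActs

section DecisionRules

variable {X Y A : Type*} [Fintype X] [Fintype Y]

/-- The pairing `(r, P) ↦ ∑ P(x,y) r(x,y)`: the expected loss under `P` of a decision rule whose
act at `x` has loss vector `r x`. -/
def lossPairing : (X → Y → ℝ) →ₗ[ℝ] (X → Y → ℝ) →ₗ[ℝ] ℝ :=
  LinearMap.mk₂ ℝ (fun r P => ∑ x, ∑ y, P x y * r x y)
    (fun r r' P => by simp [mul_add, Finset.sum_add_distrib])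
    (fun c r P => by simp [Finset.mul_sum, mul_left_comm])
    (fun r P P' => by simp [add_mul, Finset.sum_add_distrib])
    (fun c r P => by simp [Finset.mul_sum, mul_assoc])

variable [MeasurableSpace A] {L : Y → A → ℝ} {P : X → Y → ℝ} {ψ : X → Measure A}
  {Γ : Set (X → Y → ℝ)}

/-- `ψ` is a Bayes decision rule for `P`: given each `x`, no randomized decision rule has smaller
conditional expected loss. The conditional expectations are left unnormalized, as in `condEnt`, so
that a value `x` of probability zero imposes no condition. -/
def IsBayesRule (L : Y → A → ℝ) (P : X → Y → ℝ) (ψ : X → Measure A) : Prop :=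
  ∀ ψ' : X → Measure A, IsRandRule ψ' → ∀ x,
    ∑ y, P x y * actLoss L y (ψ x) ≤ ∑ y, P x y * actLoss L y (ψ' x)

theorem expLoss_nonneg (hL : ∀ y a, 0 ≤ L y a) (hP : ∀ x y, 0 ≤ P x y) (ψ : X → Measure A) :
    0 ≤ expLoss L P ψ :=
  Finset.sum_nonneg fun x _ => Finset.sum_nonneg fun y _ =>
    mul_nonneg (hP x y) (integral_nonneg (hL y))

theorem bddAbove_range_expLoss (hΓ : IsCompact Γ) (ψ : X → Measure A) :
    BddAbove (Set.range fun P : Γ => expLoss L P ψ) := by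
  have hcont : Continuous fun P => expLoss L P ψ := by unfold expLoss; fun_prop
  simpa only [Set.image_eq_range] using hΓ.bddAbove_image hcont.continuousOn

theorem condEnt_le_expLoss (hLm : ∀ y, Measurable (L y)) (hrisk : IsCompact (riskSet L))
    (P : X → Y → ℝ) (hψ : IsRandRule ψ) : condEnt L P ≤ expLoss L P ψ :=
  Finset.sum_le_sum fun x _ =>
    ciInf_le (bddBelow_range_sum_mul_actLoss hLm hrisk (P x)) ⟨ψ x, hψ x⟩

theorem expLoss_le_condEnt (hψ : IsRandRule ψ) (hbayes : IsBayesRule L P ψ) :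
    expLoss L P ψ ≤ condEnt L P := by
  refine Finset.sum_le_sum fun x _ => ?_
  have : Nonempty {m : Measure A // IsProbabilityMeasure m} := ⟨⟨ψ x, hψ x⟩⟩
  exact le_ciInf fun ζ => hbayes (fun _ => ζ.1) (fun _ => ζ.2) x

theorem isBayesRule_of_isMinOn_expLoss (hψ : IsRandRule ψ)
    (hmin : IsMinOn (expLoss L P) {ψ | IsRandRule ψ} ψ) : IsBayesRule L P ψ := by
  classical
  intro ψ' hψ' x
  have hupdate : IsRandRule (Function.update ψ x (ψ' x)) := fun x' => by
    rcases eq_or_ne x' x with rfl | hx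
    · simpa using hψ' x'
    · simpa [hx] using hψ x'
  exact le_of_sum_le_sum_update (f := fun x ζ => ∑ y, P x y * actLoss L y ζ) (hmin hupdate)

theorem exists_isSaddlePointOn_expLoss [Nonempty A] (hLm : ∀ y, Measurable (L y))
    (hrisk : IsCompact (riskSet L)) (hΓ_ne : Γ.Nonempty) (hΓ_convex : Convex ℝ Γ)
    (hΓ_compact : IsCompact Γ) :
    ∃ ψ : X → Measure A, IsRandRule ψ ∧ ∃ P ∈ Γ,
      IsSaddlePointOn {ψ | IsRandRule ψ} Γ (fun ψ P => expLoss L P ψ) ψ P := by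
  let K := convexHull ℝ (riskSet L)
  have hK_ne : K.Nonempty := (Set.range_nonempty _).convexHull
  obtain ⟨r, hr, P, hP, hsaddle⟩ := exists_isSaddlePointOn_bilinear (lossPairing (X := X) (Y := Y))
    (fun P => (lossPairing.flip P).continuous_of_finiteDimensional)
    (fun r => (lossPairing r).continuous_of_finiteDimensional)
    (S := Set.univ.pi fun _ => K) (Set.univ_pi_nonempty_iff.2 fun _ => hK_ne)
    (convex_pi fun _ _ => convex_convexHull ℝ _)
    (isCompact_univ_pi fun _ => isCompact_convexHull_of_finiteDimensional hrisk)
    hΓ_ne hΓ_convex hΓ_compact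
  choose ψ hψ hψr using fun x => exists_actLoss_eq_of_mem_convexHull_riskSet hLm (hr x trivial)
  obtain rfl : (fun x y => actLoss L y (ψ x)) = r := funext hψr
  refine ⟨ψ, hψ, P, hP, fun ψ' hψ' P' hP' => hsaddle _ (fun x _ => ?_) P' hP'⟩
  have := hψ' x
  exact actLoss_mem_convexHull_riskSet hLm hrisk (ψ' x)

theorem iSup_expLoss_le_of_isSaddlePointOn (hΓ : IsCompact Γ) (hP : P ∈ Γ)
    (hsaddle : IsSaddlePointOn {ψ | IsRandRule ψ} Γ (fun ψ P => expLoss L P ψ) ψ P)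
    {ψ' : X → Measure A} (hψ' : IsRandRule ψ') :
    ⨆ Q : Γ, expLoss L Q ψ ≤ ⨆ Q : Γ, expLoss L Q ψ' :=
  have : Nonempty Γ := ⟨⟨P, hP⟩⟩
  ciSup_le fun Q => (hsaddle ψ' hψ' Q Q.2).trans
    (le_ciSup (bddAbove_range_expLoss hΓ ψ') (⟨P, hP⟩ : Γ))

end DecisionRules

theorem weak_minimax_robust_bayes_general {X Y A : Type*} [Fintype X] [Fintype Y]
    [MeasurableSpace A] [Nonempty A] {L : Y → A → ℝ} (hLm : ∀ y, Measurable (L y))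
    (hrisk : IsCompact (riskSet L)) {Γ : Set (X → Y → ℝ)} (hΓ_ne : Γ.Nonempty)
    (hΓ_convex : Convex ℝ Γ) (hΓ_compact : IsCompact Γ) :
    ∃ (ψstar : X → Measure A) (Pstar : X → Y → ℝ),
      IsRandRule ψstar ∧ Pstar ∈ Γ ∧
      (∀ P ∈ Γ, condEnt L P ≤ condEnt L Pstar) ∧
      (∀ ψ' : X → Measure A, IsRandRule ψ' →
        ⨆ P : Γ, expLoss L P ψstar ≤ ⨆ P : Γ, expLoss L P ψ') ∧
      IsBayesRule L Pstar ψstar := by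
  obtain ⟨ψ, hψ, Q, hQ, hsaddle⟩ :=
    exists_isSaddlePointOn_expLoss hLm hrisk hΓ_ne hΓ_convex hΓ_compact
  have hbayes : IsBayesRule L Q ψ :=
    isBayesRule_of_isMinOn_expLoss hψ fun ψ' hψ' => hsaddle ψ' hψ' Q hQ
  refine ⟨ψ, Q, hψ, hQ, fun P hP => ?_,
    fun ψ' hψ' => iSup_expLoss_le_of_isSaddlePointOn hΓ_compact hQ hsaddle hψ', hbayes⟩
  calc condEnt L P ≤ expLoss L P ψ := condEnt_le_expLoss hLm hrisk P hψ
    _ ≤ expLoss L Q ψ := hsaddle ψ hψ P hP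
    _ ≤ condEnt L Q := expLoss_le_condEnt hψ hbayes

/-- **Weak version of the minimax theorem for robust Bayes rules.**
Suppose `𝒳, 𝒴` are finite, `Γ` is a convex closed set of joint distributions on `𝒳 × 𝒴`,
the loss `L : 𝒴 × 𝒜 → [0,∞)` is bounded by `C`, and the risk set
`S = {(L(y,a))_{y∈𝒴} : a ∈ 𝒜} ⊆ ℝ^𝒴` is closed. Then there exist a randomized decision rule
`ψ*` and a conditional-entropy-maximizing distribution `P* ∈ Γ` such that `ψ*` is a robust Bayes
decision rule against `Γ` (it minimizes the worst-case expected loss `sup_{P∈Γ} E_P[L(Y,ψ(X))]`)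
and `ψ*` is a Bayes decision rule for `P*`. -/
theorem weak_minimax_robust_bayes
    {X Y A : Type*} [Fintype X] [Fintype Y] [Nonempty X] [Nonempty Y]
    [MeasurableSpace A] [Nonempty A]
    (L : Y → A → ℝ) (hL0 : ∀ y a, 0 ≤ L y a)
    (C : ℝ) (hLC : ∀ y a, L y a ≤ C)
    (hLm : ∀ y, Measurable (L y))
    (Γ : Set (X → Y → ℝ))
    (hΓ : ∀ P ∈ Γ, (∀ x y, 0 ≤ P x y) ∧ ∑ x, ∑ y, P x y = 1)
    (hconv : Convex ℝ Γ) (hclosed : IsClosed Γ) (hne : Γ.Nonempty)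
    (hrisk : IsClosed {v : Y → ℝ | ∃ a : A, v = fun y => L y a}) :
    ∃ (ψstar : X → Measure A) (Pstar : X → Y → ℝ),
      IsRandRule ψstar ∧ Pstar ∈ Γ ∧
      (∀ P ∈ Γ, condEnt L P ≤ condEnt L Pstar) ∧
      (∀ ψ' : X → Measure A, IsRandRule ψ' →
        (⨆ P ∈ Γ, expLoss L P ψstar) ≤ ⨆ P ∈ Γ, expLoss L P ψ') ∧
      (∀ ψ' : X → Measure A, IsRandRule ψ' → ∀ x,
        ∑ y, Pstar x y * actLoss L y (ψstar x) ≤ ∑ y, Pstar x y * actLoss L y (ψ' x)) := by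
  have hrisk_compact : IsCompact (riskSet L) :=
    isCompact_riskSet (fun y a => ⟨hL0 y a, hLC y a⟩)
      (by simpa only [riskSet, Set.range, eq_comm] using hrisk)
  have hsup (ψ : X → Measure A) : ⨆ P ∈ Γ, expLoss L P ψ = ⨆ P : Γ, expLoss L P ψ :=
    biSup_eq_iSup_subtype_of_nonneg fun P hP => expLoss_nonneg hL0 (hΓ P hP).1 ψ
  simpa only [hsup, IsBayesRule] using weak_minimax_robust_bayes_general hLm hrisk_compact hne hconv
    (isCompact_of_isClosed_of_nonneg_of_sum_eq_one hΓ hclosed)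
end

section
/- (Closed form of the 0-1 loss conjugate F_θ.) Let t ≥ 1 and z ∈ ℝ^t. Set z̃ := (z_1,…,z_t, 0) ∈ ℝ^{t+1}, and let z̃_{(1)} ≥ z̃_{(2)} ≥ … ≥ z̃_{(t+1)} be its coordinates in descending order. Then max_{p ∈ Δ^{t+1}} ( (1 − max_{1≤i≤t+1} p_i) + Σ_{i=1}^t p_i z_i ) = max_{1 ≤ k ≤ t+1} ( k − 1 + Σ_{j=1}^k z̃_{(j)} ) / k, and the maximum over k is attained at k_max, the largest index k satisfying Σ_{i=1}^k ( z̃_{(i)} − z̃_{(k)} ) < 1. -/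
/-!
For `c` with `∑ i, (w i - c)⁺ ≤ 1` and `p` in the simplex with largest entry `M`,
`∑ i, p i * w i - c = ∑ i, p i * (w i - c) ≤ M * ∑ i, (w i - c)⁺ ≤ M`, so the objective at `p` is
at most `1 + c`. The uniform distribution on a set `s` has objective `1 + c` for the `c` solving
`∑ i ∈ s, (w i - c) = 1`, and this `c` is feasible for the bound as soon as it separates the values
of `w` on `s` from those off `s`. For `s` the `k` labels of largest `w`, the lower half of the
separation is the condition defining `kmax` at `k`, and the upper half is its failure at `k + 1`.
-/

open Finset

/-- `z̃ = (z, 0) ∈ ℝ^{t+1}`: the vector `z ∈ ℝ^t` extended by a final zero coordinate. -/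
noncomputable def ztil (t : ℕ) (z : Fin t → ℝ) : Fin (t + 1) → ℝ := Fin.snoc z 0

section Objective

variable {ι : Type*} {w p : ι → ℝ} {s : Finset ι}

/-- The level `c` at which `w` exceeds `c` by a total of one on `s`; one more than it is the value
of the objective at the uniform distribution on `s`. It is the junk value `0` when `s` is empty. -/
noncomputable def excessLevel (w : ι → ℝ) (s : Finset ι) : ℝ := (∑ i ∈ s, w i - 1) / #s

lemma sum_sub_excessLevel (w : ι → ℝ) (hs : s.Nonempty) :
    ∑ i ∈ s, (w i - excessLevel w s) = 1 := by
  have : (#s : ℝ) ≠ 0 := mod_cast hs.card_ne_zero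
  rw [sum_sub_distrib, sum_const, nsmul_eq_mul, excessLevel, mul_div_cancel₀ _ this, sub_sub_cancel]

/-- The uniform distribution on `s`, as a vector of weights; the zero vector when `s` is empty. -/
noncomputable def uniformWeights (s : Finset ι) : ι → ℝ :=
  Set.indicator s fun _ => (#s : ℝ)⁻¹

lemma uniformWeights_nonneg (s : Finset ι) (i : ι) : 0 ≤ uniformWeights s i :=
  Set.indicator_nonneg (fun _ _ => by positivity) i

lemma uniformWeights_le (s : Finset ι) (i : ι) : uniformWeights s i ≤ (#s : ℝ)⁻¹ :=
  Set.indicator_le_self' (fun _ _ => by positivity) i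

lemma iSup_uniformWeights (hs : s.Nonempty) : ⨆ i, uniformWeights s i = (#s : ℝ)⁻¹ := by
  obtain ⟨i, hi⟩ := hs
  have : Nonempty ι := ⟨i⟩
  have attained : uniformWeights s i = (#s : ℝ)⁻¹ :=
    Set.indicator_of_mem (mem_coe.2 hi) fun _ => (#s : ℝ)⁻¹
  refine le_antisymm (ciSup_le (uniformWeights_le s)) ?_
  rw [← attained]
  exact le_ciSup ⟨(#s : ℝ)⁻¹, Set.forall_mem_range.2 (uniformWeights_le s)⟩ i

variable [Fintype ι]

/-- The objective whose maximum over the simplex is the conjugate of the 0-1 entropy: the 0-1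
entropy `1 - max p` plus a linear term, with one coefficient `w i` for each label. -/
noncomputable def zeroOneObjective (w p : ι → ℝ) : ℝ := (1 - ⨆ i, p i) + ∑ i, p i * w i

lemma zeroOneObjective_le_one_add_of_sum_posPart_le_one (hp : p ∈ stdSimplex ℝ ι) {c : ℝ}
    (hc : ∑ i, (w i - c)⁺ ≤ 1) : zeroOneObjective w p ≤ 1 + c := by
  have le_iSup_p (i : ι) : p i ≤ ⨆ j, p j := le_ciSup (Set.finite_range p).bddAbove i
  have term_le (i : ι) : p i * (w i - c) ≤ (⨆ j, p j) * (w i - c)⁺ :=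
    calc p i * (w i - c) ≤ p i * (w i - c)⁺ := mul_le_mul_of_nonneg_left (le_posPart _) (hp.1 i)
      _ ≤ (⨆ j, p j) * (w i - c)⁺ := mul_le_mul_of_nonneg_right (le_iSup_p i) (posPart_nonneg _)
  have linear_le : ∑ i, p i * w i - c ≤ ⨆ i, p i :=
    calc ∑ i, p i * w i - c = ∑ i, p i * (w i - c) := by
          simp only [mul_sub, sum_sub_distrib, ← sum_mul, hp.2, one_mul]
      _ ≤ (⨆ i, p i) * ∑ i, (w i - c)⁺ := by
          rw [mul_sum]
          exact sum_le_sum fun i _ => term_le i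
      _ ≤ ⨆ i, p i := mul_le_of_le_one_right (Real.iSup_nonneg hp.1) hc
  unfold zeroOneObjective
  linarith

lemma sum_posPart_sub_excessLevel (hs : s.Nonempty) (h_mem : ∀ i ∈ s, excessLevel w s ≤ w i)
    (h_notMem : ∀ i ∉ s, w i ≤ excessLevel w s) : ∑ i, (w i - excessLevel w s)⁺ = 1 := by
  rw [← sum_sub_excessLevel w hs, ← sum_subset (subset_univ s) fun i _ hi =>
    posPart_eq_zero.2 (sub_nonpos.2 (h_notMem i hi))]
  exact sum_congr rfl fun i hi => posPart_of_nonneg (sub_nonneg.2 (h_mem i hi))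

lemma sum_uniformWeights_mul (w : ι → ℝ) (s : Finset ι) :
    ∑ i, uniformWeights s i * w i = (∑ i ∈ s, w i) / #s := by
  classical
  simp [uniformWeights, Set.indicator_apply, ite_mul, ← mul_sum, div_eq_inv_mul]

lemma uniformWeights_mem_stdSimplex (hs : s.Nonempty) : uniformWeights s ∈ stdSimplex ℝ ι := by
  have : (#s : ℝ) ≠ 0 := mod_cast hs.card_ne_zero
  exact ⟨uniformWeights_nonneg s, by simpa [this] using sum_uniformWeights_mul (fun _ => 1) s⟩

lemma zeroOneObjective_uniformWeights (w : ι → ℝ) (hs : s.Nonempty) :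
    zeroOneObjective w (uniformWeights s) = 1 + excessLevel w s := by
  rw [zeroOneObjective, iSup_uniformWeights hs, sum_uniformWeights_mul, excessLevel]
  ring

lemma one_add_excessLevel_mem_image (w : ι → ℝ) (hs : s.Nonempty) :
    1 + excessLevel w s ∈ zeroOneObjective w '' stdSimplex ℝ ι :=
  ⟨_, uniformWeights_mem_stdSimplex hs, zeroOneObjective_uniformWeights w hs⟩

lemma isGreatest_one_add_excessLevel (hs : s.Nonempty) (h_mem : ∀ i ∈ s, excessLevel w s ≤ w i)
    (h_notMem : ∀ i ∉ s, w i ≤ excessLevel w s) :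
    IsGreatest (zeroOneObjective w '' stdSimplex ℝ ι) (1 + excessLevel w s) := by
  refine ⟨one_add_excessLevel_mem_image w hs, ?_⟩
  rintro _ ⟨p, hp, rfl⟩
  exact zeroOneObjective_le_one_add_of_sum_posPart_le_one hp
    (sum_posPart_sub_excessLevel hs h_mem h_notMem).le

end Objective

section Prefix

variable {n k : ℕ} {v : Fin n → ℝ}

/-- The sum of the first `k` entries of `v`, or of all of them when `n < k`. -/
noncomputable def prefixSum (v : Fin n → ℝ) (k : ℕ) : ℝ :=
  ∑ j : Fin n, if (j : ℕ) < k then v j else 0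

lemma prefixSum_succ (v : Fin n → ℝ) (hk : k < n) :
    prefixSum v (k + 1) = prefixSum v k + v ⟨k, hk⟩ := by
  have split_last (j : Fin n) : (if (j : ℕ) < k + 1 then v j else 0)
      = (if (j : ℕ) < k then v j else 0) + if j = ⟨k, hk⟩ then v j else 0 := by
    grind
  simp only [prefixSum, split_last, sum_add_distrib, sum_ite_eq', mem_univ, if_true]

lemma prefixSum_sub_one_div_le (hv : Antitone v) (hk : 1 ≤ k) (hkn : k ≤ n)
    (h : prefixSum v k - k * v ⟨k - 1, by omega⟩ < 1) {j : Fin n} (hj : (j : ℕ) < k) :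
    (prefixSum v k - 1) / k ≤ v j := by
  have hk_pos : (0 : ℝ) < k := mod_cast hk
  calc (prefixSum v k - 1) / k ≤ v ⟨k - 1, by omega⟩ := by rw [div_le_iff₀ hk_pos]; linarith
    _ ≤ v j := hv (Fin.le_def.2 (Nat.le_sub_one_of_lt hj))

lemma le_prefixSum_sub_one_div (hv : Antitone v) (hk : 1 ≤ k) (hkn : k < n)
    (h : 1 ≤ prefixSum v (k + 1) - (k + 1 : ℕ) * v ⟨k, hkn⟩) {j : Fin n} (hj : k ≤ (j : ℕ)) :
    v j ≤ (prefixSum v k - 1) / k := by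
  have hk_pos : (0 : ℝ) < k := mod_cast hk
  rw [prefixSum_succ v hkn] at h
  push_cast at h
  calc v j ≤ v ⟨k, hkn⟩ := hv (Fin.le_def.2 hj)
    _ ≤ (prefixSum v k - 1) / k := by rw [le_div_iff₀ hk_pos]; linarith

variable {ι : Type*}

/-- The set of the first `k` labels in the enumeration `σ`: the `k` largest coordinates of `w` when
`w ∘ σ` is antitone. -/
def firstLabels (σ : Fin n ≃ ι) (k : ℕ) : Finset ι :=
  ({j | (j : ℕ) < k} : Finset (Fin n)).map σ.toEmbedding

lemma mem_firstLabels {σ : Fin n ≃ ι} {i : ι} : i ∈ firstLabels σ k ↔ (σ.symm i : ℕ) < k := by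
  simp [firstLabels, mem_map_equiv]

lemma card_firstLabels (σ : Fin n ≃ ι) (hkn : k ≤ n) : #(firstLabels σ k) = k := by
  simp [firstLabels, Fin.card_filter_val_lt, hkn]

lemma firstLabels_nonempty (σ : Fin n ≃ ι) (hk : 1 ≤ k) (hkn : k ≤ n) :
    (firstLabels σ k).Nonempty := by
  rwa [← card_pos, card_firstLabels σ hkn]

lemma excessLevel_firstLabels (σ : Fin n ≃ ι) (w : ι → ℝ) (hkn : k ≤ n) :
    excessLevel w (firstLabels σ k) = (prefixSum (w ∘ σ) k - 1) / k := by
  rw [excessLevel, card_firstLabels σ hkn, firstLabels, sum_map, sum_filter]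
  rfl

lemma one_add_excessLevel_firstLabels (σ : Fin n ≃ ι) (w : ι → ℝ) (hk : 1 ≤ k) (hkn : k ≤ n) :
    1 + excessLevel w (firstLabels σ k) = (k - 1 + prefixSum (w ∘ σ) k) / k := by
  have : (k : ℝ) ≠ 0 := mod_cast Nat.one_le_iff_ne_zero.1 hk
  rw [excessLevel_firstLabels σ w hkn]
  field_simp
  ring

end Prefix

theorem zeroOne_conjugate_closed_form_general {ι : Type*} [Fintype ι] {n : ℕ} (σ : Fin n ≃ ι)
    (w : ι → ℝ) (hσ : Antitone (w ∘ σ)) (kmax : ℕ) (hk1 : 1 ≤ kmax) (hk2 : kmax ≤ n)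
    (hkc : prefixSum (w ∘ σ) kmax - kmax * w (σ ⟨kmax - 1, by omega⟩) < 1)
    (hkl : ∀ k : ℕ, 1 ≤ k → ∀ hk : k ≤ n,
      prefixSum (w ∘ σ) k - k * w (σ ⟨k - 1, by omega⟩) < 1 → k ≤ kmax) :
    IsGreatest (zeroOneObjective w '' stdSimplex ℝ ι)
      ((kmax - 1 + prefixSum (w ∘ σ) kmax) / kmax) ∧
    IsGreatest ((fun k : ℕ => (k - 1 + prefixSum (w ∘ σ) k) / k) '' Set.Icc 1 n)
      ((kmax - 1 + prefixSum (w ∘ σ) kmax) / kmax) := by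
  have isGreatest_kmax : IsGreatest (zeroOneObjective w '' stdSimplex ℝ ι)
      ((kmax - 1 + prefixSum (w ∘ σ) kmax) / kmax) := by
    rw [← one_add_excessLevel_firstLabels σ w hk1 hk2]
    refine isGreatest_one_add_excessLevel (firstLabels_nonempty σ hk1 hk2)
      (fun i hi => ?_) (fun i hi => ?_)
    · rw [excessLevel_firstLabels σ w hk2]
      simpa using prefixSum_sub_one_div_le hσ hk1 hk2 hkc (mem_firstLabels.1 hi)
    · have hle : kmax ≤ σ.symm i := not_lt.1 (mt mem_firstLabels.2 hi)
      have hlt : kmax < n := hle.trans_lt (σ.symm i).2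
      have fails_succ := not_lt.1 (mt (hkl (kmax + 1) (by omega) hlt) (by omega))
      rw [excessLevel_firstLabels σ w hk2]
      simpa using le_prefixSum_sub_one_div hσ hk1 hlt fails_succ hle
  refine ⟨isGreatest_kmax, ⟨kmax, ⟨hk1, hk2⟩, rfl⟩, ?_⟩
  -- Every value in the maximum over `k` is itself an objective value, at a uniform distribution.
  rintro _ ⟨k, ⟨hk, hkn⟩, rfl⟩
  dsimp only
  rw [← one_add_excessLevel_firstLabels σ w hk hkn]
  exact isGreatest_kmax.2 (one_add_excessLevel_mem_image w (firstLabels_nonempty σ hk hkn))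

lemma zeroOneObjective_ztil {t : ℕ} (z : Fin t → ℝ) (p : Fin (t + 1) → ℝ) :
    zeroOneObjective (ztil t z) p = (1 - ⨆ i, p i) + ∑ i : Fin t, p i.castSucc * z i := by
  simp [zeroOneObjective, ztil, Fin.sum_univ_castSucc]

/-- **Closed form of the 0-1 loss conjugate `F_θ`.**
Let `z ∈ ℝ^t`, `z̃ = (z,0) ∈ ℝ^{t+1}`, and let `σ` be a permutation sorting `z̃` in descending
order, so `z̃_{(j)} = z̃(σ j)` (0-indexed: `z̃_{(j+1)} = ztil t z (σ j)`). Let `kmax` be the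
largest `k ∈ {1,…,t+1}` with `∑_{i=1}^k (z̃_{(i)} − z̃_{(k)}) < 1`. Then
`max_{p ∈ Δ^{t+1}} ((1 − max_i p_i) + ∑_{i=1}^t p_i z_i)
  = max_{1≤k≤t+1} (k − 1 + ∑_{j=1}^k z̃_{(j)})/k`,
and the maximum over `k` is attained at `kmax`. -/
theorem zeroOne_conjugate_closed_form (t : ℕ) (ht : 1 ≤ t) (z : Fin t → ℝ)
    (σ : Equiv.Perm (Fin (t + 1)))
    (hσ : Antitone fun j => ztil t z (σ j))
    (kmax : ℕ) (hk1 : 1 ≤ kmax) (hk2 : kmax ≤ t + 1)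
    (hkc : (∑ j : Fin (t + 1), if (j : ℕ) < kmax then ztil t z (σ j) else 0)
        - kmax * ztil t z (σ ⟨kmax - 1, by omega⟩) < 1)
    (hkl : ∀ k : ℕ, 1 ≤ k → ∀ hk : k ≤ t + 1,
      ((∑ j : Fin (t + 1), if (j : ℕ) < k then ztil t z (σ j) else 0)
        - k * ztil t z (σ ⟨k - 1, by omega⟩) < 1) → k ≤ kmax) :
    (∀ p : Fin (t + 1) → ℝ, (∀ i, 0 ≤ p i) → ∑ i, p i = 1 →
      (1 - ⨆ i, p i) + ∑ i : Fin t, p i.castSucc * z i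
        ≤ ((kmax : ℝ) - 1
            + ∑ j : Fin (t + 1), if (j : ℕ) < kmax then ztil t z (σ j) else 0) / kmax) ∧
    (∃ p : Fin (t + 1) → ℝ, (∀ i, 0 ≤ p i) ∧ (∑ i, p i = 1) ∧
      (1 - ⨆ i, p i) + ∑ i : Fin t, p i.castSucc * z i
        = ((kmax : ℝ) - 1
            + ∑ j : Fin (t + 1), if (j : ℕ) < kmax then ztil t z (σ j) else 0) / kmax) ∧
    (∀ k : ℕ, 1 ≤ k → k ≤ t + 1 →
      ((k : ℝ) - 1 + ∑ j : Fin (t + 1), if (j : ℕ) < k then ztil t z (σ j) else 0) / k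
        ≤ ((kmax : ℝ) - 1
            + ∑ j : Fin (t + 1), if (j : ℕ) < kmax then ztil t z (σ j) else 0) / kmax) := by
  obtain ⟨⟨⟨p, hp, hp_eq⟩, hub⟩, -, hmax⟩ :=
    zeroOne_conjugate_closed_form_general σ (ztil t z) hσ kmax hk1 hk2 hkc hkl
  simp only [← zeroOneObjective_ztil]
  exact ⟨fun q hq0 hq1 => hub ⟨q, ⟨hq0, hq1⟩, rfl⟩, ⟨p, hp.1, hp.2, hp_eq⟩,
    fun k hk hkn => hmax ⟨k, ⟨hk, hkn⟩, rfl⟩⟩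
end

section
/- (Subgradient of the 0-1 loss conjugate.) Let t ≥ 1, z ∈ ℝ^t, z̃ := (z, 0) ∈ ℝ^{t+1}, let σ be a permutation sorting z̃ in descending order, write z̃_{(j)} := z̃_{σ(j)} for the j-th largest coordinate of z̃, and let k_max be the largest k with Σ_{i=1}^k ( z̃_{(i)} − z̃_{(k)} ) < 1. Define u ∈ ℝ^t by u_i = 1/k_max if coordinate i of z̃ is among the k_max largest coordinates (under σ), and u_i = 0 otherwise. Then u is a subgradient of F_θ at z, where F_θ(z) = max_{1≤k≤t+1} ( k − 1 + Σ_{j=1}^k z̃_{(j)} ) / k; moreover, if k_max ≤ t and Σ_{i=1}^{k_max} ( z̃_{(i)} − z̃_{(k_max+1)} ) > 1, then F_θ is differentiable at z with ∇F_θ(z) = u. -/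
open Finset

/-- The sum of the `k` largest coordinates of `v ∈ ℝ^{t+1}`:
`topsum t v k = max { ∑_{i∈S} v_i : S ⊆ {1,…,t+1}, |S| = k }`. -/
noncomputable def topsum (t : ℕ) (v : Fin (t + 1) → ℝ) (k : ℕ) : ℝ :=
  sSup {s | ∃ S : Finset (Fin (t + 1)), S.card = k ∧ s = ∑ i ∈ S, v i}

/-- The 0-1 loss conjugate
`F_θ(z) = max_{1≤k≤t+1} (k − 1 + ∑_{j=1}^k z̃_{(j)})/k`, where `∑_{j=1}^k z̃_{(j)}` is the sum of
the `k` largest coordinates of `z̃ = (z,0)`. -/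
noncomputable def F01 (t : ℕ) (z : Fin t → ℝ) : ℝ :=
  sSup {v | ∃ k : ℕ, 1 ≤ k ∧ k ≤ t + 1 ∧ v = ((k : ℝ) - 1 + topsum t (ztil t z) k) / k}

/-!
For a nonempty `S ⊆ {1,…,t+1}` let `c_S` be the level over which the coordinates of `z̃` in `S` have
total excess `∑_{i ∈ S} (z̃_i - c_S) = 1`. Then `(|S| - 1 + ∑_{i ∈ S} z̃_i) / |S| = 1 + c_S`, so
`F01 t z = 1 + max_S c_S`, a maximum of finitely many affine functions of `z`. If every coordinate
in `S` is at least `c_S` and every other coordinate at most `c_S`, then `S` has the largest excess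
over `c_S` among all sets, which makes `c_S` the largest level. The condition defining `kmax` says
that the `kmax` largest coordinates exceed their level, and its maximality that the remaining ones
do not; so `u`, the gradient of the corresponding affine piece, is a subgradient. When all the
comparisons are strict, the maximizing piece is unique at `z`, hence near `z`, where `F01 t` is
therefore affine.
-/

section SumComparison

variable {ι M : Type*} [AddCommMonoid M] [PartialOrder M] [IsOrderedCancelAddMonoid M]
  {S T : Finset ι} {f : ι → M}

theorem sum_le_sum_of_nonneg_on_of_nonpos_off (hT : ∀ i ∈ T, 0 ≤ f i) (hTc : ∀ i ∉ T, f i ≤ 0) :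
    ∑ i ∈ S, f i ≤ ∑ i ∈ T, f i := by
  classical
  rw [← sum_sdiff_le_sum_sdiff]
  calc ∑ i ∈ S \ T, f i ≤ 0 := sum_nonpos fun i hi => hTc i (mem_sdiff.mp hi).2
    _ ≤ ∑ i ∈ T \ S, f i := sum_nonneg fun i hi => hT i (mem_sdiff.mp hi).1

theorem sum_lt_sum_of_pos_on_of_neg_off (hT : ∀ i ∈ T, 0 < f i) (hTc : ∀ i ∉ T, f i < 0)
    (hST : S ≠ T) : ∑ i ∈ S, f i < ∑ i ∈ T, f i := by
  classical
  rw [← sum_sdiff_lt_sum_sdiff]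
  have hneg : ∀ i ∈ S \ T, f i < 0 := fun i hi => hTc i (mem_sdiff.mp hi).2
  have hpos : ∀ i ∈ T \ S, 0 < f i := fun i hi => hT i (mem_sdiff.mp hi).1
  have hdiff : (S \ T).Nonempty ∨ (T \ S).Nonempty := by
    simp only [sdiff_nonempty]
    exact not_and_or.mp fun h => hST (h.1.antisymm h.2)
  rcases hdiff with hdiff | hdiff
  · exact (sum_neg hneg hdiff).trans_le (sum_nonneg fun i hi => (hpos i hi).le)
  · exact (sum_nonpos fun i hi => (hneg i hi).le).trans_lt (sum_pos hpos hdiff)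

end SumComparison

theorem eventually_forall_le_of_forall_ne_lt {ι X α : Type*} [TopologicalSpace X]
    [TopologicalSpace α] [LinearOrder α] [OrderClosedTopology α] {s : Set ι} (hs : s.Finite)
    {f : ι → X → α} {x : X} {i₀ : ι} (hf : ∀ i ∈ s, ContinuousAt (f i) x)
    (hf₀ : ContinuousAt (f i₀) x) (hlt : ∀ i ∈ s, i ≠ i₀ → f i x < f i₀ x) :
    ∀ᶠ y in nhds x, ∀ i ∈ s, f i y ≤ f i₀ y := by
  rw [Filter.eventually_all_finite hs]
  intro i hi
  rcases eq_or_ne i i₀ with rfl | hne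
  · exact .of_forall fun _ => le_rfl
  · exact ((hf i hi).eventually_lt hf₀ (hlt i hi hne)).mono fun _ => le_of_lt

section WaterLevel

variable {ι K : Type*} [Field K]

/-- The level `c` over which the values of `v` on `S` have total excess `∑ i ∈ S, (v i - c) = 1`;
it is the junk value `0` for `S = ∅`. -/
def waterLevel (S : Finset ι) (v : ι → K) : K := (∑ i ∈ S, v i - 1) / #S

theorem waterLevel_sub_waterLevel (S : Finset ι) (v w : ι → K) :
    waterLevel S v - waterLevel S w = ∑ i ∈ S, (#S : K)⁻¹ * (v i - w i) := by
  rw [waterLevel, waterLevel, ← mul_sum, sum_sub_distrib]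
  ring

variable [LinearOrder K] [IsStrictOrderedRing K] {S T : Finset ι} {v : ι → K} {c : K}

theorem waterLevel_le_iff (hS : S.Nonempty) : waterLevel S v ≤ c ↔ ∑ i ∈ S, v i - #S * c ≤ 1 := by
  rw [waterLevel, div_le_iff₀' (Nat.cast_pos.mpr hS.card_pos), sub_le_comm]

theorem waterLevel_lt_iff (hS : S.Nonempty) : waterLevel S v < c ↔ ∑ i ∈ S, v i - #S * c < 1 := by
  rw [waterLevel, div_lt_iff₀' (Nat.cast_pos.mpr hS.card_pos), sub_lt_comm]

theorem lt_waterLevel_iff (hS : S.Nonempty) : c < waterLevel S v ↔ 1 < ∑ i ∈ S, v i - #S * c := by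
  rw [waterLevel, lt_div_iff₀' (Nat.cast_pos.mpr hS.card_pos), lt_sub_comm]

theorem sum_sub_waterLevel (hS : S.Nonempty) : ∑ i ∈ S, (v i - waterLevel S v) = 1 := by
  have hcard : (#S : K) ≠ 0 := Nat.cast_ne_zero.mpr hS.card_ne_zero
  rw [sum_sub_distrib, sum_const, nsmul_eq_mul, waterLevel, mul_div_cancel₀ _ hcard, sub_sub_cancel]

theorem waterLevel_cons_lt_iff {a : ι} (ha : a ∉ S) (hS : S.Nonempty) :
    waterLevel (S.cons a ha) v < v a ↔ waterLevel S v < v a := by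
  have hsum : ∑ i ∈ S.cons a ha, v i - #(S.cons a ha) * v a = ∑ i ∈ S, v i - #S * v a := by
    rw [sum_cons, card_cons]
    push_cast
    ring
  rw [waterLevel_lt_iff (cons_nonempty ha), hsum, waterLevel_lt_iff hS]

theorem waterLevel_le_of_separated (hT : T.Nonempty) (hin : ∀ i ∈ T, waterLevel T v ≤ v i)
    (hout : ∀ i ∉ T, v i ≤ waterLevel T v) (hS : S.Nonempty) :
    waterLevel S v ≤ waterLevel T v := by
  rw [waterLevel_le_iff hS, ← nsmul_eq_mul, ← sum_const, ← sum_sub_distrib,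
    ← sum_sub_waterLevel hT (v := v)]
  exact sum_le_sum_of_nonneg_on_of_nonpos_off (fun i hi => sub_nonneg.mpr (hin i hi))
    fun i hi => sub_nonpos.mpr (hout i hi)

theorem waterLevel_lt_of_strictly_separated (hT : T.Nonempty) (hin : ∀ i ∈ T, waterLevel T v < v i)
    (hout : ∀ i ∉ T, v i < waterLevel T v) (hS : S.Nonempty) (hST : S ≠ T) :
    waterLevel S v < waterLevel T v := by
  rw [waterLevel_lt_iff hS, ← nsmul_eq_mul, ← sum_const, ← sum_sub_distrib,
    ← sum_sub_waterLevel hT (v := v)]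
  exact sum_lt_sum_of_pos_on_of_neg_off (fun i hi => sub_pos.mpr (hin i hi))
    (fun i hi => sub_neg.mpr (hout i hi)) hST

end WaterLevel

section LeadingSet

variable {n k : ℕ} {σ : Equiv.Perm (Fin n)}

/-- The set `{σ 0, …, σ (k - 1)}`; it consists of the `k` largest coordinates of a vector that `σ`
sorts in descending order. -/
def leadingSet (σ : Equiv.Perm (Fin n)) (k : ℕ) : Finset (Fin n) := {i | (σ.symm i : ℕ) < k}

theorem mem_leadingSet {i : Fin n} : i ∈ leadingSet σ k ↔ (σ.symm i : ℕ) < k := by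
  simp [leadingSet]

theorem leadingSet_eq_map (σ : Equiv.Perm (Fin n)) (k : ℕ) :
    leadingSet σ k = ({j | (j : ℕ) < k} : Finset (Fin n)).map σ.toEmbedding := by
  ext i
  simp [mem_leadingSet, mem_map_equiv]

theorem card_leadingSet (hk : k ≤ n) : #(leadingSet σ k) = k := by
  rw [leadingSet_eq_map, card_map, Fin.card_filter_val_lt, min_eq_right hk]

theorem leadingSet_nonempty (hk0 : 1 ≤ k) (hk : k ≤ n) : (leadingSet σ k).Nonempty := by
  rwa [← card_pos, card_leadingSet hk]

theorem sum_leadingSet {M : Type*} [AddCommMonoid M] (f : Fin n → M) :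
    ∑ i ∈ leadingSet σ k, f i = ∑ j : Fin n, if (j : ℕ) < k then f (σ j) else 0 := by
  simp [leadingSet_eq_map, sum_filter]

theorem apply_notMem_leadingSet (hk : k < n) : σ ⟨k, hk⟩ ∉ leadingSet σ k := by
  simp [mem_leadingSet]

theorem leadingSet_succ (hk : k < n) :
    leadingSet σ (k + 1) = (leadingSet σ k).cons (σ ⟨k, hk⟩) (apply_notMem_leadingSet hk) := by
  ext i
  rw [mem_cons, mem_leadingSet, mem_leadingSet, ← Equiv.symm_apply_eq, Fin.ext_iff,
    Nat.lt_succ_iff_lt_or_eq, or_comm]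

theorem le_of_mem_leadingSet {α : Type*} [Preorder α] {v : Fin n → α}
    (hσ : Antitone fun j => v (σ j)) (hk : k - 1 < n) {i : Fin n} (hi : i ∈ leadingSet σ k) :
    v (σ ⟨k - 1, hk⟩) ≤ v i := by
  have hle : σ.symm i ≤ ⟨k - 1, hk⟩ := Fin.le_def.mpr (Nat.le_sub_one_of_lt (mem_leadingSet.mp hi))
  simpa using hσ hle

theorem le_of_notMem_leadingSet {α : Type*} [Preorder α] {v : Fin n → α}
    (hσ : Antitone fun j => v (σ j)) (hk : k < n) {i : Fin n} (hi : i ∉ leadingSet σ k) :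
    v i ≤ v (σ ⟨k, hk⟩) := by
  have hle : ⟨k, hk⟩ ≤ σ.symm i := Fin.le_def.mpr (not_lt.mp (mt mem_leadingSet.mpr hi))
  simpa using hσ hle

variable {K : Type*} [Field K] [LinearOrder K] [IsStrictOrderedRing K] {v : Fin n → K} {c : K}

theorem waterLevel_leadingSet_lt_iff (hk0 : 1 ≤ k) (hk : k ≤ n) :
    waterLevel (leadingSet σ k) v < c ↔
      (∑ j : Fin n, if (j : ℕ) < k then v (σ j) else 0) - k * c < 1 := by
  rw [waterLevel_lt_iff (leadingSet_nonempty hk0 hk), sum_leadingSet, card_leadingSet hk]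

theorem lt_waterLevel_leadingSet_iff (hk0 : 1 ≤ k) (hk : k ≤ n) :
    c < waterLevel (leadingSet σ k) v ↔
      1 < (∑ j : Fin n, if (j : ℕ) < k then v (σ j) else 0) - k * c := by
  rw [lt_waterLevel_iff (leadingSet_nonempty hk0 hk), sum_leadingSet, card_leadingSet hk]

-- Adding the next coordinate `x` does not change whether the level lies below `x`, so if
-- `x` exceeded the level of the first `k` coordinates, `k + 1` would satisfy the condition too.
theorem le_waterLevel_leadingSet_of_maximal (hσ : Antitone fun j => v (σ j)) (hk0 : 1 ≤ k)
    (hmax : ∀ hk : k < n, ¬ waterLevel (leadingSet σ (k + 1)) v < v (σ ⟨k, hk⟩))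
    {i : Fin n} (hi : i ∉ leadingSet σ k) : v i ≤ waterLevel (leadingSet σ k) v := by
  have hk : k < n := (not_lt.mp (mt mem_leadingSet.mpr hi)).trans_lt (σ.symm i).isLt
  have hnext := hmax hk
  rw [leadingSet_succ hk, waterLevel_cons_lt_iff _ (leadingSet_nonempty hk0 hk.le), not_lt] at hnext
  exact (le_of_notMem_leadingSet hσ hk hi).trans hnext

end LeadingSet

section Conjugate

variable {t : ℕ}

@[simp]
theorem ztil_castSucc (z : Fin t → ℝ) (i : Fin t) : ztil t z i.castSucc = z i :=
  Fin.snoc_castSucc ..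

@[simp]
theorem ztil_last (z : Fin t → ℝ) : ztil t z (Fin.last t) = 0 :=
  Fin.snoc_last ..

theorem topsum_le_iff {v : Fin (t + 1) → ℝ} {k : ℕ} (hk : k ≤ t + 1) {b : ℝ} :
    topsum t v k ≤ b ↔ ∀ S : Finset (Fin (t + 1)), #S = k → ∑ i ∈ S, v i ≤ b := by
  have hbdd : BddAbove {s | ∃ S : Finset (Fin (t + 1)), #S = k ∧ s = ∑ i ∈ S, v i} := by
    refine ((Set.finite_range fun S : Finset (Fin (t + 1)) => ∑ i ∈ S, v i).subset ?_).bddAbove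
    rintro _ ⟨S, -, rfl⟩
    exact ⟨S, rfl⟩
  obtain ⟨T, -, hT⟩ := exists_subset_card_eq (s := (univ : Finset (Fin (t + 1)))) (n := k)
    (by simpa using hk)
  rw [topsum, csSup_le_iff hbdd ⟨_, T, hT, rfl⟩]
  exact ⟨fun h S hS => h _ ⟨S, hS, rfl⟩, fun h _ ⟨S, hS, hs⟩ => hs ▸ h S hS⟩

theorem F01_le_iff_topsum {z : Fin t → ℝ} {b : ℝ} :
    F01 t z ≤ b ↔ ∀ k : ℕ, 1 ≤ k → k ≤ t + 1 → ((k : ℝ) - 1 + topsum t (ztil t z) k) / k ≤ b := by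
  have hbdd : BddAbove {a | ∃ k : ℕ, 1 ≤ k ∧ k ≤ t + 1 ∧
      a = ((k : ℝ) - 1 + topsum t (ztil t z) k) / k} := by
    refine (((Set.finite_Iic (t + 1)).image
      fun k : ℕ => ((k : ℝ) - 1 + topsum t (ztil t z) k) / k).subset ?_).bddAbove
    rintro _ ⟨k, -, hk, rfl⟩
    exact ⟨k, hk, rfl⟩
  rw [F01, csSup_le_iff hbdd ⟨_, 1, le_rfl, Nat.le_add_left 1 t, rfl⟩]
  exact ⟨fun h k hk0 hk => h _ ⟨k, hk0, hk, rfl⟩,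
    fun h _ ⟨k, hk0, hk, ha⟩ => ha ▸ h k hk0 hk⟩

theorem F01_le_one_add_iff {z : Fin t → ℝ} {c : ℝ} :
    F01 t z ≤ 1 + c ↔ ∀ S : Finset (Fin (t + 1)), S.Nonempty → waterLevel S (ztil t z) ≤ c := by
  have hpiece : ∀ k : ℕ, 1 ≤ k → k ≤ t + 1 →
      (((k : ℝ) - 1 + topsum t (ztil t z) k) / k ≤ 1 + c ↔
        ∀ S : Finset (Fin (t + 1)), #S = k → ∑ i ∈ S, ztil t z i ≤ 1 + k * c) := by
    intro k hk0 hk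
    rw [← topsum_le_iff hk, div_le_iff₀ (by exact_mod_cast hk0)]
    constructor <;> intro h <;> linarith
  rw [F01_le_iff_topsum]
  constructor
  · intro h S hS
    rw [waterLevel_le_iff hS, sub_le_iff_le_add]
    have hcard : #S ≤ t + 1 := by simpa using card_le_univ S
    exact (hpiece _ hS.card_pos hcard).mp (h _ hS.card_pos hcard) S rfl
  · intro h k hk0 hk
    rw [hpiece k hk0 hk]
    rintro S rfl
    have hS : S.Nonempty := card_pos.mp hk0
    exact sub_le_iff_le_add.mp ((waterLevel_le_iff hS).mp (h S hS))

theorem one_add_waterLevel_le_F01 {S : Finset (Fin (t + 1))} (hS : S.Nonempty) (z : Fin t → ℝ) :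
    1 + waterLevel S (ztil t z) ≤ F01 t z := by
  rw [← le_sub_iff_add_le']
  exact F01_le_one_add_iff.mp (add_sub_cancel 1 _).ge S hS

theorem F01_eq_one_add_waterLevel {z : Fin t → ℝ} {S : Finset (Fin (t + 1))} (hS : S.Nonempty)
    (hmax : ∀ T : Finset (Fin (t + 1)), T.Nonempty →
      waterLevel T (ztil t z) ≤ waterLevel S (ztil t z)) :
    F01 t z = 1 + waterLevel S (ztil t z) :=
  (F01_le_one_add_iff.mpr hmax).antisymm (one_add_waterLevel_le_F01 hS z)

/-- The gradient of the affine function `z ↦ waterLevel S (ztil t z)`: the indicator vector of `S`,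
without its last coordinate, divided by `#S`. -/
noncomputable def levelGradient (S : Finset (Fin (t + 1))) (i : Fin t) : ℝ :=
  if i.castSucc ∈ S then (#S : ℝ)⁻¹ else 0

theorem waterLevel_ztil_eq (S : Finset (Fin (t + 1))) (z w : Fin t → ℝ) :
    waterLevel S (ztil t w) =
      waterLevel S (ztil t z) + ∑ i, levelGradient S i * (w i - z i) := by
  rw [← sub_eq_iff_eq_add', waterLevel_sub_waterLevel, ← sum_ite_mem_eq, Fin.sum_univ_castSucc]
  simp [levelGradient, ite_mul]

theorem hasFDerivAt_waterLevel_ztil (S : Finset (Fin (t + 1))) (z : Fin t → ℝ) :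
    HasFDerivAt (fun w => waterLevel S (ztil t w))
      (∑ i, levelGradient S i • ContinuousLinearMap.proj (R := ℝ) (φ := fun _ : Fin t => ℝ) i)
      z := by
  rw [funext (waterLevel_ztil_eq S z)]
  exact (HasFDerivAt.fun_sum fun i _ =>
    ((hasFDerivAt_apply i z).sub_const (z i)).const_mul (levelGradient S i)).const_add _

theorem F01_add_levelGradient_le {z : Fin t → ℝ} {S : Finset (Fin (t + 1))} (hS : S.Nonempty)
    (hmax : ∀ T : Finset (Fin (t + 1)), T.Nonempty →
      waterLevel T (ztil t z) ≤ waterLevel S (ztil t z)) (w : Fin t → ℝ) :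
    F01 t z + ∑ i, levelGradient S i * (w i - z i) ≤ F01 t w := by
  rw [F01_eq_one_add_waterLevel hS hmax, add_assoc, ← waterLevel_ztil_eq]
  exact one_add_waterLevel_le_F01 hS w

theorem hasFDerivAt_F01_of_forall_ne_lt {z : Fin t → ℝ} {S : Finset (Fin (t + 1))} (hS : S.Nonempty)
    (hmax : ∀ T : Finset (Fin (t + 1)), T.Nonempty → T ≠ S →
      waterLevel T (ztil t z) < waterLevel S (ztil t z)) :
    HasFDerivAt (F01 t)
      (∑ i, levelGradient S i • ContinuousLinearMap.proj (R := ℝ) (φ := fun _ : Fin t => ℝ) i)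
      z := by
  have hcont (T : Finset (Fin (t + 1))) : ContinuousAt (fun w => waterLevel T (ztil t w)) z :=
    (hasFDerivAt_waterLevel_ztil T z).continuousAt
  have hlocal : F01 t =ᶠ[nhds z] fun w => 1 + waterLevel S (ztil t w) :=
    (eventually_forall_le_of_forall_ne_lt (Set.toFinite {T : Finset _ | T.Nonempty})
      (fun T _ => hcont T) (hcont S) hmax).mono fun _ => F01_eq_one_add_waterLevel hS
  exact ((hasFDerivAt_waterLevel_ztil S z).const_add 1).congr_of_eventuallyEq hlocal

end Conjugate

/-- **Subgradient of the 0-1 loss conjugate.**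
Let `z ∈ ℝ^t`, `z̃ = (z,0)`, `σ` a permutation sorting `z̃` in descending order
(`z̃_{(j+1)} = ztil t z (σ j)`, 0-indexed), and `kmax` the largest `k` with
`∑_{i=1}^k (z̃_{(i)} − z̃_{(k)}) < 1`. Define `u ∈ ℝ^t` by `u_i = 1/kmax` if coordinate `i` of
`z̃` is among the `kmax` largest (i.e. `σ⁻¹(i) < kmax`), else `u_i = 0`. Then `u` is a
subgradient of `F01 t` at `z`; moreover if `∑_{i=1}^{kmax} (z̃_{(i)} − z̃_{(kmax+1)}) > 1`
(strict inequality, with `kmax ≤ t`), then `F01 t` is differentiable at `z` with gradient `u`. -/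
theorem zeroOne_conjugate_subgradient (t : ℕ) (ht : 1 ≤ t) (z : Fin t → ℝ)
    (σ : Equiv.Perm (Fin (t + 1)))
    (hσ : Antitone fun j => ztil t z (σ j))
    (kmax : ℕ) (hk1 : 1 ≤ kmax) (hk2 : kmax ≤ t + 1)
    (hkc : (∑ j : Fin (t + 1), if (j : ℕ) < kmax then ztil t z (σ j) else 0)
        - kmax * ztil t z (σ ⟨kmax - 1, by omega⟩) < 1)
    (hkl : ∀ k : ℕ, 1 ≤ k → ∀ hk : k ≤ t + 1,
      ((∑ j : Fin (t + 1), if (j : ℕ) < k then ztil t z (σ j) else 0)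
        - k * ztil t z (σ ⟨k - 1, by omega⟩) < 1) → k ≤ kmax)
    (u : Fin t → ℝ)
    (hu : ∀ i : Fin t,
      u i = if ((σ.symm i.castSucc : Fin (t + 1)) : ℕ) < kmax then (kmax : ℝ)⁻¹ else 0) :
    (∀ w : Fin t → ℝ, F01 t z + ∑ i, u i * (w i - z i) ≤ F01 t w) ∧
    (∀ hkt : kmax < t + 1,
      1 < (∑ j : Fin (t + 1), if (j : ℕ) < kmax then ztil t z (σ j) else 0)
            - kmax * ztil t z (σ ⟨kmax, hkt⟩) →
      DifferentiableAt ℝ (F01 t) z ∧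
      ∀ i : Fin t, fderiv ℝ (F01 t) z (Pi.single i 1) = u i) := by
  set S := leadingSet σ kmax
  have hS : S.Nonempty := leadingSet_nonempty hk1 hk2
  obtain rfl : u = levelGradient S := by
    ext i
    simp only [hu, levelGradient, S, mem_leadingSet, card_leadingSet hk2]
  have hin : ∀ i ∈ S, waterLevel S (ztil t z) < ztil t z i := fun i hi =>
    ((waterLevel_leadingSet_lt_iff hk1 hk2).mpr hkc).trans_le (le_of_mem_leadingSet hσ _ hi)
  have hout : ∀ i ∉ S, ztil t z i ≤ waterLevel S (ztil t z) := fun i hi =>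
    le_waterLevel_leadingSet_of_maximal hσ hk1 (fun hk hlt => (hkl (kmax + 1) (by omega) hk
      ((waterLevel_leadingSet_lt_iff (by omega) hk).mp hlt)).not_gt kmax.lt_succ_self) hi
  refine ⟨F01_add_levelGradient_le hS fun T hT =>
    waterLevel_le_of_separated hS (fun i hi => (hin i hi).le) hout hT, fun hkt hgap => ?_⟩
  have hout_lt : ∀ i ∉ S, ztil t z i < waterLevel S (ztil t z) := fun i hi =>
    (le_of_notMem_leadingSet hσ hkt hi).trans_lt ((lt_waterLevel_leadingSet_iff hk1 hk2).mpr hgap)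
  have hderiv := hasFDerivAt_F01_of_forall_ne_lt hS fun T hT hTS =>
    waterLevel_lt_of_strictly_separated hS hin hout_lt hT hTS
  refine ⟨hderiv.differentiableAt, fun i => ?_⟩
  simp [hderiv.fderiv, Pi.single_apply]
end

section
/- (Huber function as the restricted quadratic-loss conjugate.) Fix ρ > 0 and let 𝒫 be the set of distributions P of a real random variable Y with E[Y²] ≤ ρ². Then for every z ∈ ℝ: sup_{P ∈ 𝒫} ( Var(Y) + z·E[Y] ) = ρ² + z²/4 if |z| ≤ 2ρ, and = ρ|z| if |z| > 2ρ. Moreover, any maximizing distribution satisfies E[Y²] = ρ², and the supremum equals max_{|m| ≤ ρ} ( ρ² − m² + z m ). Consequently the derivative of this function of z equals −ρ for z ≤ −2ρ, z/2 for −2ρ < z ≤ 2ρ, and ρ for z > 2ρ. -/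
/-!
The pairs `(E[Y], E[Y²]) = (m, s)` realized by laws on `ℝ` are exactly those with `m² ≤ s`, and the
objective `s - m² + z m` increases with `s`. So the optimum is attained with `s = ρ²`, and the
conjugate `F` is the maximum of the concave quadratic `m ↦ ρ² - m² + z m` over `[-ρ, ρ]`. Its
maximizer `c z` is the projection of the vertex `z / 2` onto `[-ρ, ρ]`.

As a supremum of affine functions of `z`, `F` has `c z` as a subgradient at `z`. Since `c` is
continuous, `F' = c` everywhere, including at the break points `±2ρ`.
-/

open MeasureTheory

/-- The restricted quadratic-loss conjugate:
`F_θ(z) = sup { Var(Y) + z·E[Y] : laws of Y with E[Y²] ≤ ρ² }`. -/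
noncomputable def huberSup (ρ : ℝ) (z : ℝ) : ℝ :=
  sSup {v | ∃ μ : Measure ℝ, IsProbabilityMeasure μ ∧ Integrable (fun y => y ^ 2) μ ∧
    (∫ y, y ^ 2 ∂μ) ≤ ρ ^ 2 ∧
    v = ((∫ y, y ^ 2 ∂μ) - (∫ y, y ∂μ) ^ 2) + z * ∫ y, y ∂μ}

section Subgradient

variable {E : Type*} [NormedAddCommGroup E] [NormedSpace ℝ E]

lemma hasFDerivAt_of_continuousAt_subgradient {F : E → ℝ} {g : E → E →L[ℝ] ℝ} {z : E}
    (hg : ∀ v w, F v + g v (w - v) ≤ F w) (hcont : ContinuousAt g z) :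
    HasFDerivAt F (g z) z := by
  have hbound (w : E) : ‖F w - F z - g z (w - z)‖ ≤ ‖g w - g z‖ * ‖w - z‖ := by
    have hlower : 0 ≤ F w - F z - g z (w - z) := by linarith [hg z w]
    have hupper : F w - F z - g z (w - z) ≤ (g w - g z) (w - z) := by
      have hw := hg w z
      rw [← neg_sub w z, map_neg] at hw
      rw [sub_apply]
      linarith
    rw [Real.norm_of_nonneg hlower]
    exact hupper.trans ((le_abs_self _).trans ((g w - g z).le_opNorm (w - z)))
  have hgap : Filter.Tendsto (fun w => ‖g w - g z‖) (nhds z) (nhds 0) :=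
    tendsto_iff_norm_sub_tendsto_zero.1 hcont
  rw [hasFDerivAt_iff_isLittleO, Asymptotics.isLittleO_iff]
  intro ε hε
  filter_upwards [hgap.eventually_le_const hε] with w hw
  exact (hbound w).trans (mul_le_mul_of_nonneg_right hw (norm_nonneg _))

lemma hasDerivAt_of_continuousAt_subgradient {F g : ℝ → ℝ} {z : ℝ}
    (hg : ∀ v w, F v + g v * (w - v) ≤ F w) (hcont : ContinuousAt g z) :
    HasDerivAt F (g z) z := by
  rw [hasDerivAt_iff_hasFDerivAt]
  refine hasFDerivAt_of_continuousAt_subgradient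
    (g := fun v => ContinuousLinearMap.toSpanSingleton ℝ (g v)) (fun v w => ?_) ?_
  · simpa [mul_comm] using hg v w
  · exact (ContinuousLinearMap.toSpanSingletonCLE (𝕜 := ℝ)).continuous.continuousAt.comp hcont

end Subgradient

section Moments

variable {Ω : Type*} [MeasurableSpace Ω] {μ : Measure Ω} [IsProbabilityMeasure μ] {X : Ω → ℝ}

lemma sq_integral_le_integral_sq (hX : MemLp X 2 μ) :
    (∫ ω, X ω ∂μ) ^ 2 ≤ ∫ ω, X ω ^ 2 ∂μ := by
  have hvar := ProbabilityTheory.variance_nonneg X μ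
  rw [ProbabilityTheory.variance_eq_sub hX] at hvar
  exact sub_nonneg.1 hvar

lemma abs_integral_le_of_integral_sq_le {r : ℝ} (hX : MemLp X 2 μ) (hr : 0 ≤ r)
    (hle : ∫ ω, X ω ^ 2 ∂μ ≤ r ^ 2) : |∫ ω, X ω ∂μ| ≤ r :=
  abs_le_of_sq_le_sq ((sq_integral_le_integral_sq hX).trans hle) hr

lemma exists_isProbabilityMeasure_integral_eq_integral_sq_eq {m s : ℝ} (h : m ^ 2 ≤ s) :
    ∃ μ : Measure ℝ, IsProbabilityMeasure μ ∧ Integrable (fun y => y ^ 2) μ ∧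
      ∫ y, y ∂μ = m ∧ ∫ y, y ^ 2 ∂μ = s := by
  let μ := ProbabilityTheory.gaussianReal m (s - m ^ 2).toNNReal
  have hmem : MemLp id 2 μ := ProbabilityTheory.memLp_id_gaussianReal 2
  have hmean : ∫ y, y ∂μ = m := ProbabilityTheory.integral_id_gaussianReal
  have hvar : (∫ y, y ^ 2 ∂μ) - (∫ y, y ∂μ) ^ 2 = s - m ^ 2 :=
    calc (∫ y, y ^ 2 ∂μ) - (∫ y, y ∂μ) ^ 2
        = ProbabilityTheory.variance id μ := (ProbabilityTheory.variance_eq_sub hmem).symm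
      _ = (s - m ^ 2).toNNReal := ProbabilityTheory.variance_id_gaussianReal
      _ = s - m ^ 2 := Real.coe_toNNReal _ (sub_nonneg.2 h)
  refine ⟨μ, inferInstance, hmem.integrable_sq, hmean, ?_⟩
  rw [hmean] at hvar
  linarith

end Moments

lemma isMaxOn_Icc_sub_sq_add_mul {a b : ℝ} (hab : a ≤ b) (s z : ℝ) :
    IsMaxOn (fun m => s - m ^ 2 + z * m) (Set.Icc a b) (max a (min b (z / 2))) := by
  rw [isMaxOn_iff]
  rintro m ⟨ham, hmb⟩
  set c := max a (min b (z / 2)) with hc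
  have hvariational : 0 ≤ (z / 2 - c) * (c - m) := by
    rcases le_total (z / 2) a with hza | haz
    · have hca : c = a := by rw [hc, min_eq_right (hza.trans hab), max_eq_left hza]
      rw [hca]
      exact mul_nonneg_of_nonpos_of_nonpos (sub_nonpos.2 hza) (sub_nonpos.2 ham)
    rcases le_total (z / 2) b with hzb | hbz
    · have hcz : c = z / 2 := by rw [hc, min_eq_right hzb, max_eq_right haz]
      rw [hcz, sub_self, zero_mul]
    · have hcb : c = b := by rw [hc, min_eq_left hbz, max_eq_right hab]
      rw [hcb]
      exact mul_nonneg (sub_nonneg.2 hbz) (sub_nonneg.2 hmb)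
  have hgap : (s - c ^ 2 + z * c) - (s - m ^ 2 + z * m)
      = 2 * ((z / 2 - c) * (c - m)) + (c - m) ^ 2 := by ring
  rw [← sub_nonneg, hgap]
  positivity

/-- The maximizer of `m ↦ ρ² - m² + z m` over `[-ρ, ρ]`, i.e. the optimal mean in the conjugate:
the projection of the vertex `z / 2` onto `[-ρ, ρ]`. -/
noncomputable def huberArgmax (ρ z : ℝ) : ℝ :=
  max (-ρ) (min ρ (z / 2))

section Huber

variable {ρ z : ℝ}

lemma continuous_huberArgmax : Continuous (huberArgmax ρ) := by
  unfold huberArgmax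
  fun_prop

lemma huberArgmax_of_le_neg (hz : z ≤ -(2 * ρ)) : huberArgmax ρ z = -ρ := by
  rw [huberArgmax, max_eq_left (min_le_of_right_le (by linarith))]

lemma huberArgmax_of_abs_le (hz : |z| ≤ 2 * ρ) : huberArgmax ρ z = z / 2 := by
  obtain ⟨hlower, hupper⟩ := abs_le.1 hz
  rw [huberArgmax, min_eq_right (by linarith), max_eq_right (by linarith)]

lemma huberArgmax_of_le (hρ : 0 ≤ ρ) (hz : 2 * ρ ≤ z) : huberArgmax ρ z = ρ := by
  rw [huberArgmax, min_eq_left (by linarith), max_eq_right (by linarith)]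

lemma abs_huberArgmax_le (hρ : 0 ≤ ρ) (z : ℝ) : |huberArgmax ρ z| ≤ ρ :=
  abs_le.2 ⟨le_max_left _ _, max_le (by linarith) (min_le_left _ _)⟩

lemma isMaxOn_huberArgmax (hρ : 0 ≤ ρ) (z : ℝ) :
    IsMaxOn (fun m => ρ ^ 2 - m ^ 2 + z * m) {m | |m| ≤ ρ} (huberArgmax ρ z) := by
  simp only [abs_le]
  exact isMaxOn_Icc_sub_sq_add_mul (by linarith) (ρ ^ 2) z

lemma huberSup_eq_iSup (hρ : 0 ≤ ρ) (z : ℝ) :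
    huberSup ρ z = ⨆ m : {m : ℝ // |m| ≤ ρ}, (ρ ^ 2 - (m : ℝ) ^ 2 + z * m) := by
  apply csSup_eq_csSup_of_forall_exists_le
  · rintro _ ⟨μ, _, hint, hle, rfl⟩
    have hmem : MemLp (fun y : ℝ => y) 2 μ := (memLp_two_iff_integrable_sq (by fun_prop)).2 hint
    exact ⟨_, ⟨⟨_, abs_integral_le_of_integral_sq_le hmem hρ hle⟩, rfl⟩, by linarith⟩
  · rintro _ ⟨⟨m, hm⟩, rfl⟩
    obtain ⟨μ, hprob, hint, hmean, hsq⟩ :=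
      exists_isProbabilityMeasure_integral_eq_integral_sq_eq (sq_le_sq.2 (hm.trans (le_abs_self ρ)))
    exact ⟨_, ⟨μ, hprob, hint, hsq.le, rfl⟩, by rw [hsq, hmean]⟩

lemma huberSup_eq_huberArgmax (hρ : 0 ≤ ρ) (z : ℝ) :
    huberSup ρ z = ρ ^ 2 - huberArgmax ρ z ^ 2 + z * huberArgmax ρ z :=
  (huberSup_eq_iSup hρ z).trans
    (IsMaxOn.iSup_eq (s := {m | |m| ≤ ρ}) (abs_huberArgmax_le hρ z) (isMaxOn_huberArgmax hρ z))

lemma le_huberSup {m : ℝ} (hm : |m| ≤ ρ) (z : ℝ) :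
    ρ ^ 2 - m ^ 2 + z * m ≤ huberSup ρ z := by
  have hρ : 0 ≤ ρ := (abs_nonneg m).trans hm
  rw [huberSup_eq_huberArgmax hρ]
  exact isMaxOn_huberArgmax hρ z hm

lemma huberSup_of_abs_le (hz : |z| ≤ 2 * ρ) : huberSup ρ z = ρ ^ 2 + z ^ 2 / 4 := by
  have hρ : 0 ≤ ρ := by linarith [abs_nonneg z]
  rw [huberSup_eq_huberArgmax hρ, huberArgmax_of_abs_le hz]
  ring

lemma huberSup_of_le_abs (hρ : 0 ≤ ρ) (hz : 2 * ρ ≤ |z|) : huberSup ρ z = ρ * |z| := by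
  rw [huberSup_eq_huberArgmax hρ]
  rcases le_total 0 z with hnonneg | hnonpos
  · rw [abs_of_nonneg hnonneg] at hz ⊢
    rw [huberArgmax_of_le hρ hz]
    ring
  · rw [abs_of_nonpos hnonpos] at hz ⊢
    rw [huberArgmax_of_le_neg (le_neg_of_le_neg hz)]
    ring

-- Raising the second moment to `ρ²` at fixed mean would otherwise improve on the maximizer.
lemma integral_sq_eq_of_eq_huberSup (hρ : 0 ≤ ρ) {μ : Measure ℝ} [IsProbabilityMeasure μ]
    (hint : Integrable (fun y => y ^ 2) μ) (hle : ∫ y, y ^ 2 ∂μ ≤ ρ ^ 2)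
    (hmax : ((∫ y, y ^ 2 ∂μ) - (∫ y, y ∂μ) ^ 2) + z * ∫ y, y ∂μ = huberSup ρ z) :
    ∫ y, y ^ 2 ∂μ = ρ ^ 2 := by
  have hmem : MemLp (fun y : ℝ => y) 2 μ := (memLp_two_iff_integrable_sq (by fun_prop)).2 hint
  have hsaturated := le_huberSup (abs_integral_le_of_integral_sq_le hmem hρ hle) z
  linarith

lemma hasDerivAt_huberSup (hρ : 0 ≤ ρ) (z : ℝ) :
    HasDerivAt (huberSup ρ) (huberArgmax ρ z) z := by
  refine hasDerivAt_of_continuousAt_subgradient (fun v w => ?_) continuous_huberArgmax.continuousAt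
  calc huberSup ρ v + huberArgmax ρ v * (w - v)
      = ρ ^ 2 - huberArgmax ρ v ^ 2 + w * huberArgmax ρ v := by
        rw [huberSup_eq_huberArgmax hρ]
        ring
    _ ≤ huberSup ρ w := le_huberSup (abs_huberArgmax_le hρ v) w

end Huber

/-- **Huber function as the restricted quadratic-loss conjugate.**
Fix `ρ > 0` and let `𝒫` be the set of laws of a real `Y` with `E[Y²] ≤ ρ²`. Then
`sup_{P∈𝒫} (Var(Y) + z·E[Y])` equals `ρ² + z²/4` if `|z| ≤ 2ρ` and `ρ|z|` if `|z| > 2ρ`;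
every maximizing distribution has `E[Y²] = ρ²`; the supremum equals
`max_{|m|≤ρ} (ρ² − m² + z m)`; and the derivative in `z` is `−ρ` for `z ≤ −2ρ`, `z/2` for
`−2ρ < z ≤ 2ρ`, and `ρ` for `z > 2ρ`. -/
theorem huber_conjugate (ρ : ℝ) (hρ : 0 < ρ) :
    (∀ z : ℝ, |z| ≤ 2 * ρ → huberSup ρ z = ρ ^ 2 + z ^ 2 / 4) ∧
    (∀ z : ℝ, 2 * ρ < |z| → huberSup ρ z = ρ * |z|) ∧
    (∀ (z : ℝ) (μ : Measure ℝ), IsProbabilityMeasure μ →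
      Integrable (fun y => y ^ 2) μ → (∫ y, y ^ 2 ∂μ) ≤ ρ ^ 2 →
      ((∫ y, y ^ 2 ∂μ) - (∫ y, y ∂μ) ^ 2) + z * (∫ y, y ∂μ) = huberSup ρ z →
      (∫ y, y ^ 2 ∂μ) = ρ ^ 2) ∧
    (∀ z : ℝ, huberSup ρ z = ⨆ m : {m : ℝ // |m| ≤ ρ}, (ρ ^ 2 - (m : ℝ) ^ 2 + z * m)) ∧
    (∀ z : ℝ, z ≤ -(2 * ρ) → HasDerivAt (huberSup ρ) (-ρ) z) ∧
    (∀ z : ℝ, -(2 * ρ) < z → z ≤ 2 * ρ → HasDerivAt (huberSup ρ) (z / 2) z) ∧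
    (∀ z : ℝ, 2 * ρ < z → HasDerivAt (huberSup ρ) ρ z) := by
  have hderiv := hasDerivAt_huberSup hρ.le
  refine ⟨fun _ => huberSup_of_abs_le, fun _ hz => huberSup_of_le_abs hρ.le hz.le,
    fun _ _ _ => integral_sq_eq_of_eq_huberSup hρ.le, huberSup_eq_iSup hρ.le,
    fun z hz => ?_, fun z hlower hupper => ?_, fun z hz => ?_⟩
  · simpa only [huberArgmax_of_le_neg hz] using hderiv z
  · simpa only [huberArgmax_of_abs_le (abs_le.2 ⟨hlower.le, hupper⟩)] using hderiv z
  · simpa only [huberArgmax_of_le hρ.le hz.le] using hderiv z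
end
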